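/- arXiv:1210.5325 — 2 statements merged into one kernel-verified Lean document; each statement's English description precedes it below -/
import Mathlib

section
/- Let G be an additive commutative group and R a G-graded commutative ring. Then R is noetherian as a G-graded ring (i.e., every ascending chain of graded ideals of R is eventually stationary) if and only if for every injective cogenerator E of GrMod^G(R), the countable direct sum E^(⊕ℕ) is an injective object of GrMod^G(R). -/
/-!
Common vocabulary: internally graded rings and modules, coarsening of gradings,
graded morphisms, and derived notions (injectivity, cogenerators, smallness, ...),
following Rohrer, "Coarsenings, injectives and Hom functors".
-/

open DirectSum

section Defs

variable {G H R : Type} [AddCommGroup G] [AddCommGroup H] [CommRing R]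

/-- The `ψ`-coarsening of a `G`-grading: `(ℳ_[ψ])_h = ⨁_{g ∈ ψ⁻¹(h)} ℳ_g`. -/
def coarsen {M : Type} [AddCommGroup M] (ψ : G →+ H) (ℳ : G → AddSubgroup M) (h : H) :
    AddSubgroup M :=
  ⨆ g ∈ ψ ⁻¹' {h}, ℳ g

/-- `(R, 𝒜)` is a `G`-graded commutative ring: the `𝒜 g` are additive subgroups whose
internal direct sum is `R`, and `𝒜 g * 𝒜 h ⊆ 𝒜 (g + h)`. -/
def IsGradedRing (𝒜 : G → AddSubgroup R) : Prop :=
  (1 : R) ∈ 𝒜 0 ∧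
  (∀ {g h : G} {a b : R}, a ∈ 𝒜 g → b ∈ 𝒜 h → a * b ∈ 𝒜 (g + h)) ∧
  (letI := Classical.decEq G; DirectSum.IsInternal 𝒜)

/-- `(M, ℳ)` is a `G`-graded module over the `G`-graded ring `(R, 𝒜)`. -/
def IsGradedModule {M : Type} [AddCommGroup M] [Module R M]
    (𝒜 : G → AddSubgroup R) (ℳ : G → AddSubgroup M) : Prop :=
  (∀ {g h : G} {r : R} {m : M}, r ∈ 𝒜 g → m ∈ ℳ h → r • m ∈ ℳ (g + h)) ∧
  (letI := Classical.decEq G; DirectSum.IsInternal ℳ)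

/-- A morphism of `G`-graded `R`-modules is an `R`-linear map respecting the gradings. -/
def IsGradedHom {M N : Type} [AddCommGroup M] [Module R M]
    [AddCommGroup N] [Module R N] (ℳ : G → AddSubgroup M) (𝒩 : G → AddSubgroup N)
    (f : M →ₗ[R] N) : Prop :=
  ∀ g : G, ∀ m ∈ ℳ g, f m ∈ 𝒩 g

/-- The grading of a direct sum of graded modules:
`(⨁_i N_i)_g` consists of the elements all of whose components lie in degree `g`. -/
def directSumGrading {ι : Type} {M : ι → Type}
    [∀ i, AddCommGroup (M i)] (ℳ : ∀ i, G → AddSubgroup (M i)) (g : G) :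
    AddSubgroup (⨁ i, M i) where
  carrier := {x | ∀ i, x i ∈ ℳ i g}
  zero_mem' := fun i => by simp only [DirectSum.zero_apply, ZeroMemClass.zero_mem]
  add_mem' := fun {x y} hx hy i => by
    rw [DirectSum.add_apply]; exact add_mem (hx i) (hy i)
  neg_mem' := fun {x} hx i => by
    rw [DFinsupp.neg_apply]; exact neg_mem (hx i)

/-- `(E, ℰ)` is an injective object of the category of `G`-graded `R`-modules:
every graded morphism into `E` extends along every injective graded morphism. -/
def IsInjectiveGradedModule (𝒜 : G → AddSubgroup R) {E : Type} [AddCommGroup E] [Module R E]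
    (ℰ : G → AddSubgroup E) : Prop :=
  ∀ (A B : Type) [AddCommGroup A] [Module R A] [AddCommGroup B] [Module R B],
    ∀ (𝒮A : G → AddSubgroup A) (𝒮B : G → AddSubgroup B),
      IsGradedModule 𝒜 𝒮A → IsGradedModule 𝒜 𝒮B →
      ∀ i : A →ₗ[R] B, Function.Injective i → IsGradedHom 𝒮A 𝒮B i →
      ∀ f : A →ₗ[R] E, IsGradedHom 𝒮A ℰ f →
      ∃ g : B →ₗ[R] E, IsGradedHom 𝒮B ℰ g ∧ g ∘ₗ i = f

/-- `(M, ℳ)` is a cogenerator of the category of `G`-graded `R`-modules: every nonzero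
graded morphism is detected by a graded morphism into `M`. -/
def IsCogenerator (𝒜 : G → AddSubgroup R) {M : Type} [AddCommGroup M] [Module R M]
    (ℳ : G → AddSubgroup M) : Prop :=
  ∀ (N N' : Type) [AddCommGroup N] [Module R N] [AddCommGroup N'] [Module R N'],
    ∀ (𝒩 : G → AddSubgroup N) (𝒩' : G → AddSubgroup N'),
      IsGradedModule 𝒜 𝒩 → IsGradedModule 𝒜 𝒩' →
      ∀ u : N →ₗ[R] N', IsGradedHom 𝒩 𝒩' u → u ≠ 0 →
      ∃ v : N' →ₗ[R] M, IsGradedHom 𝒩' ℳ v ∧ v ∘ₗ u ≠ 0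

/-- `M` is a small graded module: every graded morphism from `M` into a direct sum of
graded modules factors through a finite sub-sum. -/
def IsSmall (𝒜 : G → AddSubgroup R) {M : Type} [AddCommGroup M] [Module R M]
    (ℳ : G → AddSubgroup M) : Prop :=
  ∀ (ι : Type) (N : ι → Type) [∀ i, AddCommGroup (N i)] [∀ i, Module R (N i)],
    ∀ (𝒩 : ∀ i, G → AddSubgroup (N i)), (∀ i, IsGradedModule 𝒜 (𝒩 i)) →
      ∀ f : M →ₗ[R] ⨁ i, N i, IsGradedHom ℳ (directSumGrading 𝒩) f →
        ∃ s : Finset ι, ∀ (m : M) (i : ι), i ∉ s → f m i = 0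

/-- `M` is `P`-small: every graded morphism from `M` into a direct sum of copies of `P`
factors through a finite sub-sum. -/
def IsSmallWrt {P : Type} [AddCommGroup P] [Module R P] (𝒬 : G → AddSubgroup P)
    {M : Type} [AddCommGroup M] [Module R M] (ℳ : G → AddSubgroup M) : Prop :=
  ∀ (ι : Type) (f : M →ₗ[R] ⨁ (_ : ι), P),
    IsGradedHom ℳ (directSumGrading fun (_ : ι) => 𝒬) f →
      ∃ s : Finset ι, ∀ (m : M) (i : ι), i ∉ s → f m i = 0

/-- A `G`-graded ring is steady if all small graded modules over it are finitely generated. -/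
def IsSteady (𝒜 : G → AddSubgroup R) : Prop :=
  ∀ (M : Type) [AddCommGroup M] [Module R M], ∀ ℳ : G → AddSubgroup M,
    IsGradedModule 𝒜 ℳ → IsSmall 𝒜 ℳ → Module.Finite R M

/-- A graded ideal of the `G`-graded ring `(R, 𝒜)`: `I = ⨁_g (I ∩ R_g)`. -/
def IsGradedIdeal (𝒜 : G → AddSubgroup R) (I : Ideal R) : Prop :=
  I.toAddSubgroup = ⨆ g : G, I.toAddSubgroup ⊓ 𝒜 g

/-- A simple `G`-graded `R`-module: nonzero, and its only graded submodules are `0` and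
the whole module. -/
def IsSimpleGradedModule (𝒜 : G → AddSubgroup R) {S : Type} [AddCommGroup S] [Module R S]
    (𝒮 : G → AddSubgroup S) : Prop :=
  IsGradedModule 𝒜 𝒮 ∧ Nontrivial S ∧
    ∀ P : Submodule R S, (P.toAddSubgroup = ⨆ g : G, P.toAddSubgroup ⊓ 𝒮 g) →
      P = ⊥ ∨ P = ⊤

/-- The subgroup of `M →ₗ[R] N` consisting of the graded morphisms `M → N(g)`, i.e. the
degree-`g` component of the graded Hom module `⨁HOM(M, N)`. -/
def gradedHomSubgroup {M N : Type} [AddCommGroup M] [Module R M] [AddCommGroup N] [Module R N]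
    (ℳ : G → AddSubgroup M) (𝒩 : G → AddSubgroup N) (g : G) : AddSubgroup (M →ₗ[R] N) where
  carrier := {u | ∀ g' : G, ∀ m ∈ ℳ g', u m ∈ 𝒩 (g + g')}
  zero_mem' := fun g' m _ => by simp only [LinearMap.zero_apply, ZeroMemClass.zero_mem]
  add_mem' := fun {u v} hu hv g' m hm => by
    rw [LinearMap.add_apply]; exact add_mem (hu g' m hm) (hv g' m hm)
  neg_mem' := fun {u} hu g' m hm => by
    rw [LinearMap.neg_apply]; exact neg_mem (hu g' m hm)

end Defs

/-!
An `E` satisfying the graded Baer criterion is injective. Over a noetherian graded ring a graded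
ideal `I` is finitely generated, so a graded map from `I` to a direct sum lands in a finite
sub-sum, and the criterion passes from the summands to the sum.

Conversely, a strictly ascending chain of graded ideals `I n` with union `J` and a cogenerator `E`
give nonzero maps `J → J / I n → E`. An element of `J` lies in some `I n`, hence is killed by all
but finitely many of them, and they assemble into one map from `J` to `E^(⊕ℕ)`. If `E^(⊕ℕ)` is
injective, this map is multiplication by an element `y`, whose finite support forces all but
finitely many of the maps to vanish.

An injective cogenerator always exists: the right adjoint of the functor that forgets gradings
sends the character module of `R` to one.
-/

section MathlibGradings

variable {G R M : Type} [AddCommGroup G] [CommRing R] [AddCommGroup M] [Module R M]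
  {𝒜 : G → AddSubgroup R} {ℳ : G → AddSubgroup M}

theorem IsGradedModule.gradedSMul (h : IsGradedModule 𝒜 ℳ) : SetLike.GradedSMul 𝒜 ℳ where
  smul_mem _ _ _ _ hr hm := by
    rw [vadd_eq_add]
    exact h.1 hr hm

variable [DecidableEq G]

/-- The Mathlib `GradedRing` structure carried by a graded ring. -/
noncomputable abbrev IsGradedRing.gradedRing (h : IsGradedRing 𝒜) : GradedRing 𝒜 where
  one_mem := h.1
  mul_mem _ _ _ _ ha hb := h.2.1 ha hb
  toDecomposition := IsInternal.chooseDecomposition 𝒜 (by convert h.2.2)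

/-- The Mathlib decomposition of a graded module into its homogeneous components. -/
noncomputable abbrev IsGradedModule.decomposition (h : IsGradedModule 𝒜 ℳ) : Decomposition ℳ :=
  IsInternal.chooseDecomposition ℳ (by convert h.2)

theorem isGradedModule_of_isInternal [SetLike.GradedSMul 𝒜 ℳ] (h : IsInternal ℳ) :
    IsGradedModule 𝒜 ℳ := by
  refine ⟨fun hr hm => ?_, by convert h⟩
  rw [← vadd_eq_add]
  exact SetLike.GradedSMul.smul_mem hr hm

end MathlibGradings

section Grading

variable {ι M N : Type*} [DecidableEq ι] [AddCommGroup M] [AddCommGroup N]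

theorem isInternal_of_projections {ℳ : ι → AddSubgroup M} (π : ι → M →+ M)
    (map_same : ∀ i, ∀ x ∈ ℳ i, π i x = x) (map_ne : ∀ i j, i ≠ j → ∀ x ∈ ℳ j, π i x = 0)
    (iSup_eq_top : ⨆ i, ℳ i = ⊤) : IsInternal ℳ := by
  have proj_coe (i : ι) (z : ⨁ i, ℳ i) : π i (DirectSum.coeAddMonoidHom ℳ z) = z i := by
    induction z using DirectSum.induction_on with
    | zero => simp
    | of j x =>
      obtain rfl | hij := eq_or_ne i j
      · simp [map_same i x x.2]
      · simp [map_ne i j hij x x.2, DirectSum.of_eq_of_ne _ _ _ hij]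
    | add y z hy hz => simp [hy, hz]
  constructor
  · refine (injective_iff_map_eq_zero _).2 fun z hz => DFinsupp.ext fun i => Subtype.ext ?_
    rw [← proj_coe, hz, map_zero, DirectSum.zero_apply, ZeroMemClass.coe_zero]
  · have le_range : ⨆ i, ℳ i ≤ (DirectSum.coeAddMonoidHom ℳ).range :=
      iSup_le fun i x hx => ⟨DirectSum.of (fun i => ℳ i) i ⟨x, hx⟩, by simp⟩
    exact AddMonoidHom.range_eq_top.1 (top_le_iff.1 (iSup_eq_top ▸ le_range))

variable (ℳ : ι → AddSubgroup M) [Decomposition ℳ]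

theorem iSup_eq_top_of_decomposition : ⨆ i, ℳ i = ⊤ := by
  refine top_le_iff.1 fun x _ => ?_
  induction x using Decomposition.inductionOn ℳ with
  | zero => exact zero_mem _
  | homogeneous x => exact AddSubgroup.mem_iSup_of_mem _ x.2
  | add x y hx hy => exact add_mem (hx trivial) (hy trivial)

variable {ℳ} in
theorem addMonoidHom_ext_of_homogeneous {f g : M →+ N} (h : ∀ i, ∀ x ∈ ℳ i, f x = g x) :
    f = g :=
  AddMonoidHom.ext fun x => by
    induction x using Decomposition.inductionOn ℳ with
    | zero => simp only [map_zero]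
    | homogeneous x => exact h _ x x.2
    | add x y hx hy => rw [map_add, map_add, hx, hy]

/-- The additive projection of `M` onto its component of degree `i`. -/
def gradedProj (i : ι) : M →+ M :=
  (ℳ i).subtype.comp ((DFinsupp.evalAddMonoidHom i).comp (decomposeAddEquiv ℳ).toAddMonoidHom)

variable {ℳ} in
theorem map_smul_of_homogeneous {κ R : Type*} [DecidableEq κ] [Ring R] [Module R M] [Module R N]
    {𝒜 : κ → AddSubgroup R} [Decomposition 𝒜] {f : M →+ N}
    (hf : ∀ k, ∀ r ∈ 𝒜 k, ∀ i, ∀ x ∈ ℳ i, f (r • x) = r • f x) (r : R) (x : M) :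
    f (r • x) = r • f x := by
  induction r using Decomposition.inductionOn 𝒜 with
  | zero => simp only [zero_smul, map_zero]
  | homogeneous r =>
    exact DFunLike.congr_fun (addMonoidHom_ext_of_homogeneous (ℳ := ℳ)
      (f := f.comp (DistribSMul.toAddMonoidHom M (r : R)))
      (g := (DistribSMul.toAddMonoidHom N (r : R)).comp f) fun i x hx => hf _ r r.2 i x hx) x
  | add r s hr hs => rw [add_smul, map_add, hr, hs, add_smul]

variable {ℳ} in
theorem isHomogeneous_sup {R : Type*} [Ring R] [Module R M] {P Q : Submodule R M}
    (hP : P.IsHomogeneous ℳ) (hQ : Q.IsHomogeneous ℳ) : (P ⊔ Q).IsHomogeneous ℳ := by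
  intro i z hz
  obtain ⟨x, hx, y, hy, rfl⟩ := Submodule.mem_sup.1 hz
  rw [decompose_add, DirectSum.add_apply, AddSubgroup.coe_add]
  exact Submodule.add_mem_sup (hP i hx) (hQ i hy)

end Grading

section InducedGrading

variable {G R M : Type} [CommRing R] [AddCommGroup M] [Module R M] {ℳ : G → AddSubgroup M}

/-- The grading that a graded module induces on a homogeneous submodule. -/
def submoduleGrading (ℳ : G → AddSubgroup M) (P : Submodule R M) (g : G) : AddSubgroup P :=
  (ℳ g).comap P.subtype.toAddMonoidHom

/-- The grading that a graded module induces on its quotient by a homogeneous submodule. -/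
def quotientGrading (ℳ : G → AddSubgroup M) (P : Submodule R M) (g : G) : AddSubgroup (M ⧸ P) :=
  (ℳ g).map P.mkQ.toAddMonoidHom

theorem isGradedHom_submoduleSubtype (P : Submodule R M) :
    IsGradedHom (submoduleGrading ℳ P) ℳ P.subtype :=
  fun _ _ hm => hm

theorem isGradedHom_quotientMk (P : Submodule R M) :
    IsGradedHom ℳ (quotientGrading ℳ P) P.mkQ :=
  fun _ m hm => ⟨m, hm, rfl⟩

end InducedGrading

section GradedModule

variable {G R M N : Type} [AddCommGroup G] [CommRing R] [AddCommGroup M] [Module R M]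
  [AddCommGroup N] [Module R N] {𝒜 : G → AddSubgroup R} {ℳ : G → AddSubgroup M}
  {𝒩 : G → AddSubgroup N}

theorem mem_gradedHomSubgroup_zero {f : M →ₗ[R] N} :
    f ∈ gradedHomSubgroup ℳ 𝒩 0 ↔ IsGradedHom ℳ 𝒩 f :=
  forall_congr' fun g => by rw [zero_add]

theorem toSpanSingleton_mem_gradedHomSubgroup [SetLike.GradedSMul 𝒜 ℳ] {h : G} {m : M}
    (hm : m ∈ ℳ h) : LinearMap.toSpanSingleton R M m ∈ gradedHomSubgroup 𝒜 ℳ h := by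
  intro g r hr
  rw [add_comm, ← vadd_eq_add]
  exact SetLike.GradedSMul.smul_mem hr hm

/-- The grading of the shifted module `M(-k)`. -/
def shiftGrading (ℳ : G → AddSubgroup M) (k g : G) : AddSubgroup M :=
  ℳ (g - k)

theorem IsGradedModule.shift (hℳ : IsGradedModule 𝒜 ℳ) (k : G) :
    IsGradedModule 𝒜 (shiftGrading ℳ k) := by
  classical
  have := hℳ.gradedSMul
  let _ := hℳ.decomposition
  have : SetLike.GradedSMul 𝒜 (shiftGrading ℳ k) := ⟨fun g j r m hr hm => by
    simpa only [shiftGrading, vadd_eq_add, add_sub_assoc] using hℳ.1 hr hm⟩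
  refine isGradedModule_of_isInternal (isInternal_of_projections
    (fun g => gradedProj ℳ (g - k)) (fun g x hx => decompose_of_mem_same ℳ hx)
    (fun g j hgj x hx => decompose_of_mem_ne ℳ hx fun heq => hgj (sub_left_injective heq).symm) ?_)
  exact ((Equiv.subRight k).iSup_comp (g := ℳ)).trans (iSup_eq_top_of_decomposition ℳ)

variable [DecidableEq G]

section HomogeneousSubmodules

variable [Decomposition ℳ] [Decomposition 𝒩] {f : M →ₗ[R] N} {h : G}

theorem decompose_apply_of_mem_gradedHomSubgroup (hf : f ∈ gradedHomSubgroup ℳ 𝒩 h) (g : G)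
    (m : M) : (decompose 𝒩 (f m) (h + g) : N) = f (decompose ℳ m g) := by
  induction m using Decomposition.inductionOn ℳ with
  | zero => simp
  | @homogeneous k m =>
    obtain rfl | hkg := eq_or_ne k g
    · rw [decompose_of_mem_same 𝒩 (hf k m m.2), decompose_of_mem_same ℳ m.2]
    · rw [decompose_of_mem_ne 𝒩 (hf k m m.2) fun heq => hkg (add_left_cancel heq),
        decompose_of_mem_ne ℳ m.2 hkg, map_zero]
  | add m n hm hn => simp [hm, hn]

theorem isHomogeneous_comap_of_mem_gradedHomSubgroup (hf : f ∈ gradedHomSubgroup ℳ 𝒩 h)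
    {P : Submodule R N} (hP : P.IsHomogeneous 𝒩) : (P.comap f).IsHomogeneous ℳ := fun g m hm => by
  rw [Submodule.mem_comap, ← decompose_apply_of_mem_gradedHomSubgroup hf]
  exact hP _ hm

theorem isHomogeneous_range_of_mem_gradedHomSubgroup (hf : f ∈ gradedHomSubgroup ℳ 𝒩 h) :
    f.range.IsHomogeneous 𝒩 := by
  rintro g _ ⟨m, rfl⟩
  rw [← add_sub_cancel h g, decompose_apply_of_mem_gradedHomSubgroup hf]
  exact LinearMap.mem_range_self f _

end HomogeneousSubmodules

variable [SetLike.GradedSMul 𝒜 ℳ] [Decomposition ℳ]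

theorem isGradedModule_submoduleGrading {P : Submodule R M} (hP : P.IsHomogeneous ℳ) :
    IsGradedModule 𝒜 (submoduleGrading ℳ P) := by
  have : SetLike.GradedSMul 𝒜 (submoduleGrading ℳ P) :=
    ⟨fun _ _ _ _ hr hm => SetLike.GradedSMul.smul_mem (A := 𝒜) (B := ℳ) hr hm⟩
  refine isGradedModule_of_isInternal (isInternal_of_projections
    (fun g => ((gradedProj ℳ g).comp P.subtype.toAddMonoidHom).codRestrict P
      fun x => hP g x.2) (fun g x hx => Subtype.ext (decompose_of_mem_same ℳ hx))
    (fun g k hgk x hx => Subtype.ext (decompose_of_mem_ne ℳ hx hgk.symm)) ?_)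
  refine top_le_iff.1 fun x _ => ?_
  classical
  have hx : x = ∑ g ∈ (decompose ℳ (x : M)).support, ⟨decompose ℳ (x : M) g, hP g x.2⟩ :=
    Subtype.ext (by simp [sum_support_decompose ℳ (x : M)])
  rw [hx]
  exact sum_mem fun g _ => AddSubgroup.mem_iSup_of_mem g (decompose ℳ (x : M) g).2

theorem isGradedModule_quotientGrading {P : Submodule R M} (hP : P.IsHomogeneous ℳ) :
    IsGradedModule 𝒜 (quotientGrading ℳ P) := by
  have : SetLike.GradedSMul 𝒜 (quotientGrading ℳ P) := ⟨by
    rintro g k r _ hr ⟨m, hm, rfl⟩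
    exact ⟨r • m, SetLike.GradedSMul.smul_mem hr hm, map_smul P.mkQ r m⟩⟩
  refine isGradedModule_of_isInternal (isInternal_of_projections
    (fun g => QuotientAddGroup.map P.toAddSubgroup P.toAddSubgroup (gradedProj ℳ g)
      fun x hx => hP g hx) ?_ ?_ ?_)
  · rintro g _ ⟨m, hm, rfl⟩
    exact congrArg P.mkQ (decompose_of_mem_same ℳ hm)
  · rintro g k hgk _ ⟨m, hm, rfl⟩
    exact (congrArg P.mkQ (decompose_of_mem_ne ℳ hm hgk.symm)).trans (map_zero P.mkQ)
  · calc ⨆ g, (ℳ g).map P.mkQ.toAddMonoidHom = (⨆ g, ℳ g).map P.mkQ.toAddMonoidHom :=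
          (AddSubgroup.map_iSup _ _).symm
      _ = P.mkQ.toAddMonoidHom.range := by
          rw [iSup_eq_top_of_decomposition, AddMonoidHom.range_eq_map]
      _ = ⊤ := AddMonoidHom.range_eq_top.2 P.mkQ_surjective

end GradedModule

section GradedPMap

variable {G R B E : Type} [DecidableEq G] [CommRing R] [AddCommGroup B] [Module R B]
  [AddCommGroup E] [Module R E] {ℬ : G → AddSubgroup B} {ℰ : G → AddSubgroup E}

/-- A partially defined graded morphism: its domain is a homogeneous submodule, on which it
preserves degrees. -/
structure IsGradedPMap (ℬ : G → AddSubgroup B) [Decomposition ℬ] (ℰ : G → AddSubgroup E)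
    (p : B →ₗ.[R] E) : Prop where
  isHomogeneous_domain : p.domain.IsHomogeneous ℬ
  map_mem : ∀ {g : G} (x : p.domain), (x : B) ∈ ℬ g → p x ∈ ℰ g

namespace IsGradedPMap

variable [Decomposition ℬ]

theorem sSup {c : Set (B →ₗ.[R] E)} (hc : ∀ p ∈ c, IsGradedPMap ℬ ℰ p) (hne : c.Nonempty)
    (hdir : DirectedOn (· ≤ ·) c) : IsGradedPMap ℬ ℰ (LinearPMap.sSup c hdir) where
  isHomogeneous_domain g x hx := by
    obtain ⟨p, hp, hxp⟩ := (LinearPMap.mem_domain_sSup_iff hne hdir).1 hx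
    exact (LinearPMap.mem_domain_sSup_iff hne hdir).2
      ⟨p, hp, (hc p hp).isHomogeneous_domain g hxp⟩
  map_mem x hx := by
    obtain ⟨p, hp, hxp⟩ := (LinearPMap.mem_domain_sSup_iff hne hdir).1 x.2
    rw [LinearPMap.sSup_apply hdir hp ⟨x, hxp⟩]
    exact (hc p hp).map_mem _ hx

theorem sup {p q : B →ₗ.[R] E} (hp : IsGradedPMap ℬ ℰ p) (hq : IsGradedPMap ℬ ℰ q)
    (hpq : ∀ (x : p.domain) (y : q.domain), (x : B) = y → p x = q y) :
    IsGradedPMap ℬ ℰ (p.sup q hpq) where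
  isHomogeneous_domain := isHomogeneous_sup hp.isHomogeneous_domain hq.isHomogeneous_domain
  map_mem {g} z hz := by
    obtain ⟨x, hx, y, hy, hxy⟩ := Submodule.mem_sup.1 z.2
    have components_add : (decompose ℬ x g : B) + decompose ℬ y g = z := by
      rw [← AddSubgroup.coe_add, ← DirectSum.add_apply, ← decompose_add, hxy,
        decompose_of_mem_same ℬ hz]
    rw [LinearPMap.sup_apply hpq ⟨_, hp.isHomogeneous_domain g hx⟩
      ⟨_, hq.isHomogeneous_domain g hy⟩ z components_add]
    exact add_mem (hp.map_mem _ (decompose ℬ x g).2) (hq.map_mem _ (decompose ℬ y g).2)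

theorem exists_maximal_ge {p : B →ₗ.[R] E} (hp : IsGradedPMap ℬ ℰ p) :
    ∃ q, p ≤ q ∧ Maximal (IsGradedPMap ℬ ℰ) q :=
  zorn_le_nonempty₀ {q | IsGradedPMap ℬ ℰ q}
    (fun _ hc hchain _ hq => ⟨_, sSup hc ⟨_, hq⟩ hchain.directedOn,
      fun _ => LinearPMap.le_sSup hchain.directedOn⟩) p hp

end IsGradedPMap

end GradedPMap

section Baer

variable {G R A B E : Type} [AddCommGroup G] [CommRing R] [AddCommGroup A] [Module R A]
  [AddCommGroup B] [Module R B] [AddCommGroup E] [Module R E] {𝒜 : G → AddSubgroup R}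
  {ℬ : G → AddSubgroup B} {ℰ : G → AddSubgroup E} [DecidableEq G]

/-- The graded form of Baer's condition: every graded morphism `I → E(h)` from a graded ideal
extends to `R`, that is, it is multiplication by an element of degree `h`. -/
def IsGradedBaer (𝒜 : G → AddSubgroup R) [GradedRing 𝒜] (ℰ : G → AddSubgroup E) : Prop :=
  ∀ (I : HomogeneousIdeal 𝒜) (h : G),
    ∀ φ : I.toIdeal →ₗ[R] E, φ ∈ gradedHomSubgroup (submoduleGrading 𝒜 I.toIdeal) ℰ h →
      ∃ y ∈ ℰ h, ∀ r : I.toIdeal, φ r = (r : R) • y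

theorem IsInjectiveGradedModule.isGradedBaer [GradedRing 𝒜]
    (hℰ : IsInjectiveGradedModule 𝒜 ℰ) : IsGradedBaer 𝒜 ℰ := by
  intro I h φ hφ
  have hφ' : IsGradedHom (shiftGrading (submoduleGrading 𝒜 I.toIdeal) h) ℰ φ := fun g r hr => by
    simpa only [add_sub_cancel] using hφ (g - h) r hr
  have gradedModule_R : IsGradedModule 𝒜 𝒜 :=
    isGradedModule_of_isInternal (Decomposition.isInternal 𝒜)
  obtain ⟨ψ, hψ, hψφ⟩ := hℰ I.toIdeal R _ _
    ((isGradedModule_submoduleGrading I.isHomogeneous).shift h) (gradedModule_R.shift h)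
    I.toIdeal.subtype I.toIdeal.subtype_injective (fun _ _ hr => hr) φ hφ'
  have one_mem : (1 : R) ∈ shiftGrading 𝒜 h h := by
    rw [shiftGrading, sub_self]
    exact SetLike.GradedOne.one_mem
  refine ⟨ψ 1, hψ h 1 one_mem, fun r => ?_⟩
  rw [← hψφ, ← map_smul, smul_eq_mul, mul_one]
  rfl

namespace IsGradedPMap

section

variable [Decomposition ℬ]

theorem mkSpanSingleton' [GradedRing 𝒜] [SetLike.GradedSMul 𝒜 ℬ] [SetLike.GradedSMul 𝒜 ℰ]
    {h : G} {b : B} {y : E} (hb : b ∈ ℬ h) (hy : y ∈ ℰ h)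
    (hby : ∀ r : R, r • b = 0 → r • y = 0) :
    IsGradedPMap ℬ ℰ (LinearPMap.mkSpanSingleton' b y hby) where
  isHomogeneous_domain := by
    rw [LinearPMap.domain_mkSpanSingleton, ← LinearMap.range_toSpanSingleton]
    exact isHomogeneous_range_of_mem_gradedHomSubgroup
      (toSpanSingleton_mem_gradedHomSubgroup (𝒜 := 𝒜) hb)
  map_mem := by
    rintro g ⟨z, hz_span⟩ hz
    obtain ⟨s, hs, rfl⟩ : ∃ s ∈ 𝒜 (g - h), s • b = z := by
      obtain ⟨r, rfl⟩ := Submodule.mem_span_singleton.1 hz_span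
      refine ⟨decompose 𝒜 r (g - h), (decompose 𝒜 r (g - h)).2, ?_⟩
      have := decompose_apply_of_mem_gradedHomSubgroup
        (toSpanSingleton_mem_gradedHomSubgroup (𝒜 := 𝒜) hb) (g - h) r
      rw [add_sub_cancel, LinearMap.toSpanSingleton_apply, decompose_of_mem_same ℬ hz] at this
      exact this.symm
    rw [LinearPMap.mkSpanSingleton'_apply, RingHom.id_apply]
    simpa only [add_sub_cancel, LinearMap.toSpanSingleton_apply] using
      toSpanSingleton_mem_gradedHomSubgroup hy (g - h) s hs

theorem exists_of_isGradedHom {𝒮 : G → AddSubgroup A} [Decomposition 𝒮] {i : A →ₗ[R] B}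
    (hi : Function.Injective i) (hgi : IsGradedHom 𝒮 ℬ i) {f : A →ₗ[R] E}
    (hf : IsGradedHom 𝒮 ℰ f) :
    ∃ p : B →ₗ.[R] E, IsGradedPMap ℬ ℰ p ∧ ∀ a, ∃ x : p.domain, (x : B) = i a ∧ p x = f a := by
  let p : B →ₗ.[R] E := ⟨i.range, f ∘ₗ (LinearEquiv.ofInjective i hi).symm.toLinearMap⟩
  have p_apply (a : A) : p ⟨i a, a, rfl⟩ = f a :=
    congrArg f ((LinearEquiv.ofInjective i hi).symm_apply_apply a)
  have hi0 := mem_gradedHomSubgroup_zero.2 hgi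
  refine ⟨p, ⟨isHomogeneous_range_of_mem_gradedHomSubgroup hi0, ?_⟩,
    fun a => ⟨⟨i a, a, rfl⟩, rfl, p_apply a⟩⟩
  rintro g ⟨_, a, rfl⟩ ha
  have ha_mem : a ∈ 𝒮 g := by
    have := decompose_apply_of_mem_gradedHomSubgroup hi0 g a
    rw [zero_add, decompose_of_mem_same ℬ ha] at this
    rw [hi this]
    exact (decompose 𝒮 a g).2
  rw [p_apply]
  exact hf g a ha_mem

end

section Extension

variable [GradedRing 𝒜] [SetLike.GradedSMul 𝒜 ℬ] [Decomposition ℬ]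

theorem exists_smul_eq (hℰ : IsGradedBaer 𝒜 ℰ) {p : B →ₗ.[R] E}
    (hp : IsGradedPMap ℬ ℰ p) {h : G} {b : B} (hb : b ∈ ℬ h) :
    ∃ y ∈ ℰ h, ∀ (r : R) (hr : r • b ∈ p.domain), p ⟨r • b, hr⟩ = r • y := by
  have hb' := toSpanSingleton_mem_gradedHomSubgroup (𝒜 := 𝒜) hb
  let I : HomogeneousIdeal 𝒜 := ⟨p.domain.comap (LinearMap.toSpanSingleton R B b),
    isHomogeneous_comap_of_mem_gradedHomSubgroup hb' hp.isHomogeneous_domain⟩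
  let φ : I.toIdeal →ₗ[R] E :=
    p.toFun ∘ₗ (LinearMap.toSpanSingleton R B b).restrict (p := I.toIdeal) (fun _ hr => hr)
  obtain ⟨y, hy, hφ⟩ := hℰ I h φ fun g r hr => hp.map_mem _ (hb' g r hr)
  exact ⟨y, hy, fun r hr => hφ ⟨r, hr⟩⟩

theorem exists_ge_mem_domain [SetLike.GradedSMul 𝒜 ℰ]
    (hℰ : IsGradedBaer 𝒜 ℰ) {p : B →ₗ.[R] E} (hp : IsGradedPMap ℬ ℰ p) {h : G} {b : B}
    (hb : b ∈ ℬ h) : ∃ q, IsGradedPMap ℬ ℰ q ∧ p ≤ q ∧ b ∈ q.domain := by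
  obtain ⟨y, hy, hpy⟩ := exists_smul_eq hℰ hp hb
  have hby (r : R) (hr : r • b = 0) : r • y = 0 := by
    rw [← hpy r (hr ▸ zero_mem _)]
    exact (congrArg p (Subtype.ext hr)).trans p.map_zero
  have agree (x : p.domain) (z : (LinearPMap.mkSpanSingleton' (σ := RingHom.id R) b y hby).domain)
      (hxz : (x : B) = z) : p x = LinearPMap.mkSpanSingleton' b y hby z := by
    obtain ⟨x, hx⟩ := x
    obtain ⟨z, hz⟩ := z
    obtain rfl : x = z := hxz
    obtain ⟨r, rfl⟩ := Submodule.mem_span_singleton.1 hz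
    rw [LinearPMap.mkSpanSingleton'_apply, RingHom.id_apply, hpy r hx]
  refine ⟨p.sup _ agree, hp.sup (mkSpanSingleton' (𝒜 := 𝒜) hb hy hby) agree,
    LinearPMap.left_le_sup _ _ _, ?_⟩
  exact Submodule.mem_sup_right (Submodule.mem_span_singleton_self b)

theorem domain_eq_top_of_maximal [SetLike.GradedSMul 𝒜 ℰ] (hℰ : IsGradedBaer 𝒜 ℰ)
    {p : B →ₗ.[R] E} (hp : Maximal (IsGradedPMap ℬ ℰ) p) : p.domain = ⊤ := by
  refine Submodule.eq_top_iff'.2 fun b => ?_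
  induction b using Decomposition.inductionOn ℬ with
  | zero => exact zero_mem _
  | homogeneous b =>
    obtain ⟨q, hq, hpq, hbq⟩ := exists_ge_mem_domain hℰ hp.prop b.2
    exact (hp.le_of_ge hq hpq).1 hbq
  | add b b' hb hb' => exact add_mem hb hb'

end Extension

end IsGradedPMap

theorem IsGradedBaer.isInjectiveGradedModule [GradedRing 𝒜] [SetLike.GradedSMul 𝒜 ℰ]
    (hℰ : IsGradedBaer 𝒜 ℰ) : IsInjectiveGradedModule 𝒜 ℰ := by
  intro A B _ _ _ _ 𝒮 ℬ h𝒮 hℬ i hi hgi f hf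
  have := hℬ.gradedSMul
  let _ := h𝒮.decomposition
  let _ := hℬ.decomposition
  obtain ⟨p, hp, hpf⟩ := IsGradedPMap.exists_of_isGradedHom hi hgi hf
  obtain ⟨q, hpq, hq⟩ := hp.exists_maximal_ge
  have q_mem (b : B) : b ∈ q.domain := by
    rw [IsGradedPMap.domain_eq_top_of_maximal hℰ hq]
    trivial
  refine ⟨q.toFun ∘ₗ LinearMap.id.codRestrict q.domain q_mem,
    fun g b hb => hq.prop.map_mem ⟨b, q_mem b⟩ hb, LinearMap.ext fun a => ?_⟩
  obtain ⟨x, hx, hpx⟩ := hpf a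
  exact (hpq.2 hx).symm.trans hpx

end Baer

section DirectSums

variable {ι R : Type*} {N : ι → Type*} [∀ i, AddCommGroup (N i)]

theorem exists_directSum_apply_eq (x : ∀ i, N i) (hx : {i | x i ≠ 0}.Finite) :
    ∃ y : ⨁ i, N i, ∀ i, y i = x i :=
  ⟨⟨x, Trunc.mk ⟨hx.toFinset.1, fun _ => or_iff_not_imp_right.2 hx.mem_toFinset.2⟩⟩,
    fun _ => rfl⟩

variable [Ring R] [∀ i, Module R (N i)]

theorem exists_linearMap_directSum_apply_eq {M : Type*} [AddCommGroup M] [Module R M]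
    (f : ∀ i, M →ₗ[R] N i) (hf : ∀ x, {i | f i x ≠ 0}.Finite) :
    ∃ F : M →ₗ[R] ⨁ i, N i, ∀ x i, F x i = f i x := by
  choose F hF using fun x => exists_directSum_apply_eq (fun i => f i x) (hf x)
  refine ⟨{ toFun := F, map_add' := fun x y => ?_, map_smul' := fun r x => ?_ }, hF⟩
  · exact DFinsupp.ext fun i => by rw [DirectSum.add_apply, hF, hF, hF, map_add]
  · exact DFinsupp.ext fun i => by rw [RingHom.id_apply, DirectSum.smul_apply, hF, hF, map_smul]

theorem exists_finset_forall_notMem_eq_zero_of_fg {P : Submodule R (⨁ i, N i)} (hP : P.FG) :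
    ∃ s : Finset ι, ∀ x ∈ P, ∀ i ∉ s, x i = 0 := by
  classical
  induction P, hP using Submodule.fg_induction with
  | singleton x =>
    refine ⟨x.support, fun y hy i hi => ?_⟩
    obtain ⟨r, rfl⟩ := Submodule.mem_span_singleton.1 hy
    rw [DirectSum.smul_apply, DFinsupp.notMem_support_iff.1 hi, smul_zero]
  | sup P Q _ _ hP hQ =>
    obtain ⟨s, hs⟩ := hP
    obtain ⟨t, ht⟩ := hQ
    refine ⟨s ∪ t, fun z hz i hi => ?_⟩
    obtain ⟨x, hx, y, hy, rfl⟩ := Submodule.mem_sup.1 hz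
    rw [Finset.notMem_union] at hi
    rw [DirectSum.add_apply, hs x hx i hi.1, ht y hy i hi.2, add_zero]

end DirectSums

section Noetherian

variable {G R : Type} [AddCommGroup G] [CommRing R] {𝒜 : G → AddSubgroup R} [DecidableEq G]
  [GradedRing 𝒜]

theorem isGradedIdeal_iff_isHomogeneous {I : Ideal R} :
    IsGradedIdeal 𝒜 I ↔ I.IsHomogeneous 𝒜 := by
  constructor
  · intro hI g x hx
    refine AddSubgroup.iSup_induction _ (C := fun x => (decompose 𝒜 x g : R) ∈ I)
      (hI ▸ hx : x ∈ ⨆ k, I.toAddSubgroup ⊓ 𝒜 k) (fun k x hxk => ?_) (by simp) fun x y hx hy => ?_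
    · obtain rfl | hkg := eq_or_ne k g
      · rw [decompose_of_mem_same 𝒜 hxk.2]
        exact hxk.1
      · rw [decompose_of_mem_ne 𝒜 hxk.2 hkg]
        exact zero_mem I
    · rw [decompose_add, DirectSum.add_apply, AddSubgroup.coe_add]
      exact add_mem hx hy
  · intro hI
    refine le_antisymm (fun x hx => ?_) (iSup_le fun g => inf_le_left)
    classical
    rw [← sum_support_decompose 𝒜 x]
    exact sum_mem fun g _ => AddSubgroup.mem_iSup_of_mem g ⟨hI g hx, (decompose 𝒜 x g).2⟩

theorem wellFoundedGT_homogeneousIdeal_iff :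
    WellFoundedGT (HomogeneousIdeal 𝒜) ↔
      ∀ I : ℕ → Ideal R, (∀ n, IsGradedIdeal 𝒜 (I n)) → Monotone I →
        ∃ n, ∀ m, n ≤ m → I m = I n := by
  rw [wellFoundedGT_iff_monotone_chain_condition]
  constructor
  · intro hchain I hI hmono
    obtain ⟨n, hn⟩ := hchain
      ⟨fun n => ⟨I n, isGradedIdeal_iff_isHomogeneous.1 (hI n)⟩, fun _ _ hmn => hmono hmn⟩
    exact ⟨n, fun m hnm => (congrArg HomogeneousIdeal.toIdeal (hn m hnm)).symm⟩
  · intro hchain I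
    obtain ⟨n, hn⟩ := hchain (fun n => (I n).toIdeal)
      (fun n => isGradedIdeal_iff_isHomogeneous.2 (I n).isHomogeneous) fun _ _ h =>
        I.monotone h
    exact ⟨n, fun m hnm => HomogeneousIdeal.ext (hn m hnm).symm⟩

theorem fg_toIdeal_of_wellFoundedGT [WellFoundedGT (HomogeneousIdeal 𝒜)]
    (I : HomogeneousIdeal 𝒜) : I.toIdeal.FG := by
  obtain ⟨J, ⟨hJI, hJfg⟩, hJmax⟩ := exists_maximal_of_wellFoundedGT
    (fun J : HomogeneousIdeal 𝒜 => J ≤ I ∧ J.toIdeal.FG) ⟨⊥, bot_le, Submodule.fg_bot⟩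
  suffices I ≤ J by rwa [le_antisymm this hJI]
  intro x hx
  refine (J.isHomogeneous.mem_iff 𝒜).2 fun g => ?_
  let K : HomogeneousIdeal 𝒜 := ⟨Ideal.span {(decompose 𝒜 x g : R)},
    Ideal.homogeneous_span 𝒜 _ (by rintro _ rfl; exact ⟨g, (decompose 𝒜 x g).2⟩)⟩
  have hKI : K ≤ I := (Ideal.span_singleton_le_iff_mem _).2 (I.isHomogeneous g hx)
  have hJK : J ⊔ K ≤ J :=
    hJmax ⟨sup_le hJI hKI, Submodule.FG.sup hJfg (Submodule.fg_span_singleton _)⟩ le_sup_left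
  exact hJK (le_sup_right (a := J) (Ideal.mem_span_singleton_self _))

theorem IsGradedBaer.directSum [WellFoundedGT (HomogeneousIdeal 𝒜)] {ι : Type} {E : ι → Type}
    [∀ i, AddCommGroup (E i)] [∀ i, Module R (E i)] {ℰ : ∀ i, G → AddSubgroup (E i)}
    (hℰ : ∀ i, IsGradedBaer 𝒜 (ℰ i)) : IsGradedBaer 𝒜 (directSumGrading ℰ) := by
  intro I h φ hφ
  have : Module.Finite R I.toIdeal := Module.Finite.iff_fg.2 (fg_toIdeal_of_wellFoundedGT I)
  have range_fg : φ.range.FG := Module.Finite.iff_fg.1 (Module.Finite.range φ)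
  obtain ⟨s, hs⟩ := exists_finset_forall_notMem_eq_zero_of_fg range_fg
  choose y hy hφy using fun i => hℰ i I h (DirectSum.component R ι E i ∘ₗ φ)
    fun g r hr => hφ g r hr i
  classical
  obtain ⟨z, hz⟩ := exists_directSum_apply_eq (fun i => if i ∈ s then y i else 0)
    (s.finite_toSet.subset fun i hi => by_contra fun his => hi (if_neg his))
  refine ⟨z, fun i => ?_, fun r => DFinsupp.ext fun i => ?_⟩
  · rw [hz]
    split_ifs
    · exact hy i
    · exact zero_mem _
  · rw [DirectSum.smul_apply, hz]
    split_ifs with hi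
    · exact hφy i r
    · rw [smul_zero, hs (φ r) ⟨r, rfl⟩ i hi]

instance directSumGrading.gradedSMul {ι : Type} {E : ι → Type} [∀ i, AddCommGroup (E i)]
    [∀ i, Module R (E i)] {ℰ : ∀ i, G → AddSubgroup (E i)} [∀ i, SetLike.GradedSMul 𝒜 (ℰ i)] :
    SetLike.GradedSMul 𝒜 (directSumGrading ℰ) where
  smul_mem _ _ _ _ hr hx i := SetLike.GradedSMul.smul_mem (B := ℰ i) hr (hx i)

end Noetherian

section Converse

variable {G R M E : Type} [AddCommGroup G] [CommRing R] [AddCommGroup M] [Module R M]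
  [AddCommGroup E] [Module R E] [DecidableEq G] {𝒜 : G → AddSubgroup R}
  {ℳ : G → AddSubgroup M} {ℰ : G → AddSubgroup E}

theorem IsCogenerator.exists_isGradedHom_ne_zero [SetLike.GradedSMul 𝒜 ℳ] [Decomposition ℳ]
    (hℰ : IsCogenerator 𝒜 ℰ) {P Q : Submodule R M} (hP : P.IsHomogeneous ℳ)
    (hQ : Q.IsHomogeneous ℳ) (hPQ : ¬ P ≤ Q) :
    ∃ f : P →ₗ[R] E, IsGradedHom (submoduleGrading ℳ P) ℰ f ∧ f ≠ 0 ∧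
      ∀ x : P, (x : M) ∈ Q → f x = 0 := by
  have hu : Q.mkQ ∘ₗ P.subtype ≠ 0 := fun h0 => hPQ fun x hx =>
    (Submodule.Quotient.mk_eq_zero Q).1 (DFunLike.congr_fun h0 ⟨x, hx⟩)
  have hgu : IsGradedHom (submoduleGrading ℳ P) (quotientGrading ℳ Q) (Q.mkQ ∘ₗ P.subtype) :=
    fun g x hx => isGradedHom_quotientMk Q g _ (isGradedHom_submoduleSubtype P g x hx)
  obtain ⟨v, hv, hvu⟩ := hℰ _ _ _ _ (isGradedModule_submoduleGrading hP)
    (isGradedModule_quotientGrading hQ) _ hgu hu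
  refine ⟨v ∘ₗ Q.mkQ ∘ₗ P.subtype, fun g x hx => hv g _ (hgu g x hx), hvu, fun x hx => ?_⟩
  exact (congrArg v ((Submodule.Quotient.mk_eq_zero Q).2 hx)).trans (map_zero v)

theorem wellFoundedGT_homogeneousIdeal_of_isGradedBaer [GradedRing 𝒜] (hℰ : IsCogenerator 𝒜 ℰ)
    (hbaer : IsGradedBaer 𝒜 (directSumGrading fun _ : ℕ => ℰ)) :
    WellFoundedGT (HomogeneousIdeal 𝒜) := by
  rw [wellFoundedGT_iff_monotone_chain_condition]
  intro I
  by_contra! not_stationary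
  let J : HomogeneousIdeal 𝒜 := ⨆ n, I n
  have mem_J {x : R} : x ∈ J.toIdeal ↔ ∃ n, x ∈ (I n).toIdeal := by
    rw [HomogeneousIdeal.toIdeal_iSup]
    exact Submodule.mem_iSup_of_directed _ I.monotone.directed_le
  have hJI (n : ℕ) : ¬ J.toIdeal ≤ (I n).toIdeal := fun hJ => by
    obtain ⟨m, hnm, hne⟩ := not_stationary n
    exact hne (le_antisymm (I.monotone hnm) ((le_iSup I m).trans hJ))
  choose f hf hf0 hfI using fun n =>
    hℰ.exists_isGradedHom_ne_zero (𝒜 := 𝒜) (ℳ := 𝒜) J.isHomogeneous (I n).isHomogeneous (hJI n)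
  obtain ⟨F, hF⟩ := exists_linearMap_directSum_apply_eq f fun x => by
    obtain ⟨n, hn⟩ := mem_J.1 x.2
    exact (Set.finite_lt_nat n).subset fun k hk =>
      lt_of_not_ge fun hnk => hk (hfI k x (I.monotone hnk hn))
  obtain ⟨y, -, hy⟩ := hbaer J 0 F (mem_gradedHomSubgroup_zero.2 fun g x hx k => by
    rw [hF]
    exact hf k g x hx)
  classical
  obtain ⟨k, hk⟩ := Infinite.exists_notMem_finset y.support
  refine hf0 k (LinearMap.ext fun x => ?_)
  rw [← hF, hy, DirectSum.smul_apply, DFinsupp.notMem_support_iff.1 hk, smul_zero,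
    LinearMap.zero_apply]

end Converse

section Cofree

variable {G R D : Type}

/-- The module `⨁_g D` over a graded ring, in which `r` of degree `g` carries the copy of `D` in
degree `h` to the copy in degree `g + h` through its action on `D`. It is the value at `D` of the
right adjoint of the functor that forgets the grading. -/
def Cofree [CommRing R] (_𝒜 : G → AddSubgroup R) (D : Type) [AddCommGroup D] : Type :=
  ⨁ _ : G, D

namespace Cofree

variable [CommRing R] {𝒜 : G → AddSubgroup R} [AddCommGroup D]

instance : AddCommGroup (Cofree 𝒜 D) := inferInstanceAs (AddCommGroup (⨁ _ : G, D))

variable [DecidableEq G]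

/-- The inclusion of `D` as the component of degree `g`. -/
def of (𝒜 : G → AddSubgroup R) (g : G) : D →+ Cofree 𝒜 D :=
  DirectSum.of (fun _ : G => D) g

/-- The map `⨁_g D → D` that forgets degrees and adds up. -/
def sumAddHom (𝒜 : G → AddSubgroup R) (D : Type) [AddCommGroup D] : Cofree 𝒜 D →+ D :=
  DirectSum.toAddMonoid fun _ : G => AddMonoidHom.id D

theorem sumAddHom_of (g : G) (d : D) : sumAddHom 𝒜 D (of 𝒜 g d) = d :=
  DirectSum.toAddMonoid_of (fun _ : G => AddMonoidHom.id D) g d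

/-- The grading of the cofree module by the copies of `D`. -/
def grading (𝒜 : G → AddSubgroup R) (D : Type) [AddCommGroup D] (g : G) :
    AddSubgroup (Cofree 𝒜 D) :=
  (of 𝒜 g).range

theorem isInternal_grading : IsInternal (grading 𝒜 D) := by
  refine isInternal_of_projections (fun g => (of 𝒜 g).comp (DFinsupp.evalAddMonoidHom g)) ?_ ?_ ?_
  · rintro g _ ⟨d, rfl⟩
    exact congrArg (of 𝒜 g) (DirectSum.of_eq_same (β := fun _ : G => D) g d)
  · rintro g h hgh _ ⟨d, rfl⟩
    exact (congrArg (of 𝒜 g) (DirectSum.of_eq_of_ne (β := fun _ : G => D) h g d hgh)).trans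
      (map_zero _)
  · refine top_le_iff.1 fun x _ => ?_
    induction x using DirectSum.induction_on with
    | zero => exact zero_mem _
    | of g d => exact AddSubgroup.mem_iSup_of_mem g ⟨d, rfl⟩
    | add x y hx hy => exact add_mem (hx trivial) (hy trivial)

variable [AddCommGroup G] [GradedRing 𝒜] [Module R D]

/-- The action of the components of `R` on the copies of `D`. -/
@[reducible] def gmodule (𝒜 : G → AddSubgroup R) [GradedRing 𝒜] (D : Type) [AddCommGroup D]
    [Module R D] : Gmodule (fun g => 𝒜 g) (fun _ : G => D) where
  smul r d := (r : R) • d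
  one_smul := fun ⟨g, d⟩ => Sigma.ext (zero_add g) (heq_of_eq (one_smul R d))
  mul_smul := fun ⟨g, r⟩ ⟨h, s⟩ ⟨k, d⟩ =>
    Sigma.ext (add_assoc g h k) (heq_of_eq (mul_smul (r : R) (s : R) d))
  smul_add r := smul_add (r : R)
  smul_zero r := smul_zero (r : R)
  add_smul r s := add_smul (r : R) (s : R)
  zero_smul := zero_smul R

instance : Module R (Cofree 𝒜 D) :=
  letI := gmodule 𝒜 D
  letI : Module (⨁ g, 𝒜 g) (⨁ _ : G, D) := Gmodule.module _ _
  Module.compHom (⨁ _ : G, D) (decomposeRingEquiv 𝒜).toRingHom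

theorem smul_of {g h : G} {r : R} (hr : r ∈ 𝒜 g) (d : D) :
    r • of 𝒜 h d = of 𝒜 (g + h) (r • d) := by
  let _ := gmodule 𝒜 D
  change decompose 𝒜 r • DirectSum.of (fun _ : G => D) h d = _
  rw [decompose_of_mem 𝒜 hr]
  exact Gmodule.of_smul_of (fun g => 𝒜 g) (fun _ : G => D) _ _

theorem isGradedModule : IsGradedModule 𝒜 (grading 𝒜 D) := by
  have : SetLike.GradedSMul 𝒜 (grading 𝒜 D) := ⟨by
    rintro g h r _ hr ⟨d, rfl⟩
    exact ⟨r • d, (smul_of hr d).symm⟩⟩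
  exact isGradedModule_of_isInternal isInternal_grading

/-- The counit of the adjunction, that is, `sumAddHom` as a linear map. -/
def counit (𝒜 : G → AddSubgroup R) [GradedRing 𝒜] (D : Type) [AddCommGroup D] [Module R D] :
    Cofree 𝒜 D →ₗ[R] D :=
  { sumAddHom 𝒜 D with
    map_smul' := by
      let _ := (isGradedModule (𝒜 := 𝒜) (D := D)).decomposition
      refine map_smul_of_homogeneous (𝒜 := 𝒜) (ℳ := grading 𝒜 D) (f := sumAddHom 𝒜 D) ?_
      rintro g r hr h _ ⟨d, rfl⟩
      rw [smul_of hr, sumAddHom_of, sumAddHom_of] }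

theorem counit_of (g : G) (d : D) : counit 𝒜 D (of 𝒜 g d) = d :=
  sumAddHom_of g d

theorem of_counit_of_mem {g : G} {x : Cofree 𝒜 D} (hx : x ∈ grading 𝒜 D g) :
    of 𝒜 g (counit 𝒜 D x) = x := by
  obtain ⟨d, rfl⟩ := hx
  rw [counit_of]

section UniversalProperty

variable {B : Type} [AddCommGroup B] [Module R B]
  {ℬ : G → AddSubgroup B} [Decomposition ℬ]

theorem hom_ext {f g : B →ₗ[R] Cofree 𝒜 D} (hf : IsGradedHom ℬ (grading 𝒜 D) f)
    (hg : IsGradedHom ℬ (grading 𝒜 D) g) (hfg : counit 𝒜 D ∘ₗ f = counit 𝒜 D ∘ₗ g) : f = g := by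
  refine LinearMap.toAddMonoidHom_injective
    (addMonoidHom_ext_of_homogeneous (ℳ := ℬ) fun h b hb => ?_)
  have hb_eq : counit 𝒜 D (f b) = counit 𝒜 D (g b) := DFunLike.congr_fun hfg b
  exact (of_counit_of_mem (hf h b hb)).symm.trans
    ((congrArg (of 𝒜 h) hb_eq).trans (of_counit_of_mem (hg h b hb)))

theorem exists_isGradedHom_counit_comp_eq [SetLike.GradedSMul 𝒜 ℬ] (θ : B →ₗ[R] D) :
    ∃ f : B →ₗ[R] Cofree 𝒜 D, IsGradedHom ℬ (grading 𝒜 D) f ∧ counit 𝒜 D ∘ₗ f = θ := by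
  let F : B →+ Cofree 𝒜 D := (DirectSum.toAddMonoid fun h =>
    (of 𝒜 h).comp (θ.toAddMonoidHom.comp (ℬ h).subtype)).comp (decomposeAddEquiv ℬ).toAddMonoidHom
  have F_apply {h : G} {b : B} (hb : b ∈ ℬ h) : F b = of 𝒜 h (θ b) :=
    (congrArg _ (decompose_of_mem ℬ hb)).trans (DirectSum.toAddMonoid_of _ _ _)
  have F_smul : ∀ (r : R) (b : B), F (r • b) = r • F b :=
    map_smul_of_homogeneous (𝒜 := 𝒜) (ℳ := ℬ) fun g r hr h b hb => by
      rw [F_apply (SetLike.GradedSMul.smul_mem hr hb), F_apply hb, smul_of hr, map_smul,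
        vadd_eq_add]
  refine ⟨{ F with map_smul' := F_smul }, fun h b hb => ⟨θ b, (F_apply hb).symm⟩,
    LinearMap.toAddMonoidHom_injective
      (addMonoidHom_ext_of_homogeneous (ℳ := ℬ) fun h b hb => ?_)⟩
  exact (congrArg (counit 𝒜 D) (F_apply hb)).trans (counit_of h (θ b))

end UniversalProperty

theorem isInjectiveGradedModule [Module.Injective R D] :
    IsInjectiveGradedModule 𝒜 (grading 𝒜 D) := by
  intro A B _ _ _ _ 𝒮 ℬ h𝒮 hℬ i hi hgi f hf
  have := hℬ.gradedSMul
  let _ := h𝒮.decomposition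
  let _ := hℬ.decomposition
  obtain ⟨θ, hθ⟩ := Module.Injective.extension_property R _ _ _ i hi (counit 𝒜 D ∘ₗ f)
  obtain ⟨g, hg, rfl⟩ := exists_isGradedHom_counit_comp_eq (𝒜 := 𝒜) (ℬ := ℬ) θ
  exact ⟨g, hg, hom_ext (fun h a ha => hg h _ (hgi h a ha)) hf hθ⟩

theorem isCogenerator
    (hD : ∀ (N : Type) [AddCommGroup N] [Module R N] (x : N), x ≠ 0 →
      ∃ θ : N →ₗ[R] D, θ x ≠ 0) : IsCogenerator 𝒜 (grading 𝒜 D) := by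
  intro N N' _ _ _ _ 𝒩 𝒩' _ h𝒩' u _ hu
  have := h𝒩'.gradedSMul
  let _ := h𝒩'.decomposition
  obtain ⟨x, hx⟩ := DFunLike.ne_iff.1 hu
  obtain ⟨θ, hθ⟩ := hD N' (u x) hx
  obtain ⟨v, hv, rfl⟩ := exists_isGradedHom_counit_comp_eq (𝒜 := 𝒜) (ℬ := 𝒩') θ
  refine ⟨v, hv, fun h0 => hθ ?_⟩
  exact (congrArg (counit 𝒜 D) (DFunLike.congr_fun h0 x)).trans (map_zero _)

end Cofree

end Cofree

theorem exists_linearMap_characterModule_apply_ne_zero {R N : Type*} [CommRing R] [AddCommGroup N]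
    [Module R N] {x : N} (hx : x ≠ 0) : ∃ θ : N →ₗ[R] CharacterModule R, θ x ≠ 0 := by
  obtain ⟨c, hc⟩ := CharacterModule.exists_character_apply_ne_zero_of_ne_zero hx
  refine ⟨CharacterModule.curry (CharacterModule.dual (TensorProduct.rid R N).toLinearMap c),
    fun h0 => hc ?_⟩
  calc c x = c (TensorProduct.rid R N (x ⊗ₜ 1)) := by rw [TensorProduct.rid_tmul, one_smul]
    _ = 0 := DFunLike.congr_fun h0 1

/-- **Statement 6** (Proposition 1.79, graded Bass–Papp): a `G`-graded commutative ring is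
noetherian (ascending chains of graded ideals are stationary) if and only if `E^(⊕ℕ)` is an
injective graded module for every injective cogenerator `E` of `GrMod^G(R)`. -/
theorem noetherian_iff_directSum_injective_cogenerator_injective
    {G R : Type} [AddCommGroup G] [CommRing R]
    (𝒜 : G → AddSubgroup R) (h𝒜 : IsGradedRing 𝒜) :
    (∀ I : ℕ → Ideal R, (∀ n, IsGradedIdeal 𝒜 (I n)) → Monotone I →
        ∃ n, ∀ m, n ≤ m → I m = I n) ↔
      (∀ (E : Type) [AddCommGroup E] [Module R E], ∀ ℰ : G → AddSubgroup E,
        IsGradedModule 𝒜 ℰ → IsInjectiveGradedModule 𝒜 ℰ → IsCogenerator 𝒜 ℰ →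
          IsInjectiveGradedModule 𝒜 (directSumGrading (fun (_ : ℕ) => ℰ))) := by
  classical
  let _ := h𝒜.gradedRing
  rw [← wellFoundedGT_homogeneousIdeal_iff]
  constructor
  · intro _ E _ _ ℰ hℰ hinj _
    have := hℰ.gradedSMul
    exact (IsGradedBaer.directSum fun _ => hinj.isGradedBaer).isInjectiveGradedModule
  · intro hsum
    have : Module.Injective R (CharacterModule R) :=
      Module.Flat.iff_characterModule_injective.1 inferInstance
    have hcog : IsCogenerator 𝒜 (Cofree.grading 𝒜 (CharacterModule R)) :=
      Cofree.isCogenerator fun _ _ _ _ => exists_linearMap_characterModule_apply_ne_zero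
    have hinj := hsum _ _ Cofree.isGradedModule Cofree.isInjectiveGradedModule hcog
    exact wellFoundedGT_homogeneousIdeal_of_isGradedBaer hcog hinj.isGradedBaer
end

section
/- Let G be an additive commutative group, R a G-graded commutative ring, and M a G-graded R-module. Suppose there exists an infinite subgroup F ⊆ G such that, denoting by π: G → G/F the canonical projection, the natural transformation h_π^M is an isomorphism. Then for every additive commutative group H and every surjective group homomorphism ψ: G → H, the natural transformation h_ψ^M is an isomorphism; in particular h_0^M (for the projection G → 0) is an isomorphism. -/
/-!
Common vocabulary: internally graded rings and modules, coarsening of gradings,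
graded morphisms, and derived notions (injectivity, cogenerators, smallness, ...),
following Rohrer, "Coarsenings, injectives and Hom functors".
-/

open DirectSum

/-!
The homogeneous components of a linear map `u : M → N` form a family in which only finitely many
members are nonzero at any given element of `M`, and `u` lies in the graded Hom module exactly when
only finitely many of them are nonzero at all. If infinitely many were nonzero, choose a sequence
of them, of degrees `eₙ`, together with distinct `fₙ` in the kernel of `φ`. With the `n`-th copy of
`N` shifted by `eₙ - fₙ`, they assemble into a map `M → ⨁ₙ N(eₙ - fₙ)` whose `n`-th coordinate has
degree `fₙ`. This map becomes graded after coarsening along `φ`, yet it has infinitely many nonzero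
homogeneous components, so `h_φ^M` is not an isomorphism. Hence if `h_φ^M` is an isomorphism, every
linear map out of `M` lies in the graded Hom module, and the choice of coarsening is immaterial.
-/

section Decomposition

variable {G M N : Type*} [DecidableEq G] [AddCommGroup M] [AddCommGroup N]
  (ℳ : G → AddSubgroup M) (𝒩 : G → AddSubgroup N)

section

variable [Decomposition 𝒩]

theorem finite_setOf_coe_decompose_ne_zero (x : N) :
    {g | (decompose 𝒩 x g : N) ≠ 0}.Finite :=
  (DFinsupp.finite_support (decompose 𝒩 x)).subset fun _ hg h0 =>
    hg (congrArg Subtype.val h0)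

theorem finsum_coe_decompose (x : N) : ∑ᶠ g, (decompose 𝒩 x g : N) = x := by
  classical
  conv_rhs => rw [← sum_support_decompose 𝒩 x]
  refine finsum_eq_sum_of_support_subset _ fun g hg => ?_
  rw [Finset.mem_coe, DFinsupp.mem_support_toFun]
  exact fun h0 => hg (congrArg Subtype.val h0)

end

section

variable [Decomposition ℳ]

theorem map_eq_of_forall_homogeneous {F : Type*} [FunLike F M N] [AddMonoidHomClass F M N]
    {u v : F} (h : ∀ g, ∀ m ∈ ℳ g, u m = v m) (m : M) : u m = v m := by
  induction m using Decomposition.inductionOn ℳ with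
  | zero => rw [map_zero, map_zero]
  | homogeneous m => exact h _ m m.2
  | add m m' hm hm' => rw [map_add, map_add, hm, hm']

end

variable {ℳ} in
theorem coe_decompose_map_coeAddMonoidHom {K : Type*} [DecidableEq K] {𝒦 : K → AddSubgroup M}
    [Decomposition 𝒩] {q : M →+ N} {e : K → G} (he : Function.Injective e)
    (hq : ∀ k, ∀ m ∈ 𝒦 k, q m ∈ 𝒩 (e k)) (x : ⨁ k, 𝒦 k) (k : K) :
    (decompose 𝒩 (q (DirectSum.coeAddMonoidHom 𝒦 x)) (e k) : N) = q (x k) := by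
  induction x using DirectSum.induction_on with
  | zero => simp only [map_zero, decompose_zero, DirectSum.zero_apply, ZeroMemClass.coe_zero]
  | of j m =>
    rw [DirectSum.coeAddMonoidHom_of]
    obtain rfl | hjk := eq_or_ne j k
    · rw [of_eq_same, decompose_of_mem_same 𝒩 (hq j m m.2)]
    · rw [of_eq_of_ne _ _ _ hjk.symm, ZeroMemClass.coe_zero, map_zero,
        decompose_of_mem_ne 𝒩 (hq j m m.2) (he.ne hjk)]
  | add x y hx hy =>
    simp only [map_add, decompose_add, DirectSum.add_apply, AddSubgroup.coe_add, hx, hy]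

theorem coe_decompose_map [Decomposition ℳ] [Decomposition 𝒩] {q : M →+ N} {e : G → G}
    (he : Function.Injective e) (hq : ∀ g, ∀ m ∈ ℳ g, q m ∈ 𝒩 (e g)) (m : M) (g : G) :
    (decompose 𝒩 (q m) (e g) : N) = q (decompose ℳ m g) := by
  conv_lhs => rw [← (decompose ℳ).symm_apply_apply m]
  exact coe_decompose_map_coeAddMonoidHom 𝒩 he hq (decompose ℳ m) g

variable {ℳ} in
theorem mem_range_coeAddMonoidHom_of_mem {g : G} {m : M} (hm : m ∈ ℳ g) :
    m ∈ (DirectSum.coeAddMonoidHom ℳ).range :=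
  ⟨of (fun g => ℳ g) g ⟨m, hm⟩, DirectSum.coeAddMonoidHom_of ℳ g ⟨m, hm⟩⟩

end Decomposition

section HomogeneousComponent

variable {G R M N : Type*} [AddCommGroup G] [DecidableEq G] [CommRing R]
  [AddCommGroup M] [Module R M] [AddCommGroup N] [Module R N]
  (ℳ : G → AddSubgroup M) (𝒩 : G → AddSubgroup N)
  [Decomposition ℳ] [Decomposition 𝒩]

/-- The additive map underlying `homogeneousComponent`, which exists without any action of a
graded ring: it sends `m` of degree `k` to the component of `u m` of degree `g + k`. -/
def homogeneousComponentAddHom (u : M →+ N) (g : G) : M →+ N :=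
  (toAddMonoid fun k => (𝒩 (g + k)).subtype.comp <|
    (DFinsupp.evalAddMonoidHom (g + k)).comp <|
      (decomposeAddEquiv 𝒩).toAddMonoidHom.comp <| u.comp (ℳ k).subtype).comp
    (decomposeAddEquiv ℳ).toAddMonoidHom

variable {ℳ} in
theorem homogeneousComponentAddHom_apply_of_mem (u : M →+ N) (g : G) {k : G} {m : M}
    (hm : m ∈ ℳ k) :
    homogeneousComponentAddHom ℳ 𝒩 u g m = decompose 𝒩 (u m) (g + k) := by
  change toAddMonoid _ (decompose ℳ m) = _
  rw [decompose_of_mem ℳ hm, toAddMonoid_of]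
  rfl

theorem homogeneousComponentAddHom_map_smul (𝒜 : G → AddSubgroup R) [Decomposition 𝒜]
    [SetLike.GradedSMul 𝒜 ℳ] [SetLike.GradedSMul 𝒜 𝒩] (u : M →ₗ[R] N) (g : G) (r : R) (m : M) :
    homogeneousComponentAddHom ℳ 𝒩 u.toAddMonoidHom g (r • m) =
      r • homogeneousComponentAddHom ℳ 𝒩 u.toAddMonoidHom g m := by
  set c := homogeneousComponentAddHom ℳ 𝒩 u.toAddMonoidHom g with hc
  refine map_eq_of_forall_homogeneous 𝒜 (u := c.comp ((smulAddHom R M).flip m))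
    (v := (smulAddHom R N).flip (c m)) (fun a r hr => ?_) r
  refine map_eq_of_forall_homogeneous ℳ (u := c.comp (smulAddHom R M r))
    (v := (smulAddHom R N r).comp c) (fun k m hm => ?_) m
  have hrm : r • m ∈ ℳ (a + k) := SetLike.GradedSMul.smul_mem hr hm
  calc c (r • m) = decompose 𝒩 (u (r • m)) (a + (g + k)) := by
        rw [add_left_comm]
        exact homogeneousComponentAddHom_apply_of_mem 𝒩 u.toAddMonoidHom g hrm
    _ = decompose 𝒩 (r • u m) (a + (g + k)) := by rw [map_smul]
    _ = r • (decompose 𝒩 (u m) (g + k) : N) :=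
        coe_decompose_map 𝒩 𝒩 (q := smulAddHom R N r) (add_right_injective a)
          (fun _ _ hx => SetLike.GradedSMul.smul_mem hr hx) (u m) (g + k)
    _ = r • c m := by
        rw [hc, homogeneousComponentAddHom_apply_of_mem 𝒩 u.toAddMonoidHom g hm]
        rfl

variable (𝒜 : G → AddSubgroup R) [Decomposition 𝒜] [SetLike.GradedSMul 𝒜 ℳ]
  [SetLike.GradedSMul 𝒜 𝒩]

/-- The component of degree `g` of a linear map `u` between graded modules: it sends `m` of degree
`k` to the component of `u m` of degree `g + k`. The map `u` is the pointwise sum of its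
homogeneous components. -/
def homogeneousComponent (u : M →ₗ[R] N) (g : G) : M →ₗ[R] N where
  __ := homogeneousComponentAddHom ℳ 𝒩 u.toAddMonoidHom g
  map_smul' := homogeneousComponentAddHom_map_smul ℳ 𝒩 𝒜 u g

variable {ℳ} in
theorem homogeneousComponent_apply_of_mem (u : M →ₗ[R] N) (g : G) {k : G} {m : M}
    (hm : m ∈ ℳ k) : homogeneousComponent ℳ 𝒩 𝒜 u g m = decompose 𝒩 (u m) (g + k) :=
  homogeneousComponentAddHom_apply_of_mem 𝒩 u.toAddMonoidHom g hm

variable {ℳ 𝒩} in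
theorem homogeneousComponent_eq_of_forall {u v : M →ₗ[R] N} {g : G}
    (h : ∀ k, ∀ m ∈ ℳ k, (decompose 𝒩 (u m) (g + k) : N) = v m) :
    homogeneousComponent ℳ 𝒩 𝒜 u g = v :=
  LinearMap.ext <| map_eq_of_forall_homogeneous ℳ fun k m hm => by
    rw [homogeneousComponent_apply_of_mem 𝒩 𝒜 u g hm, h k m hm]

theorem homogeneousComponent_zero (g : G) : homogeneousComponent ℳ 𝒩 𝒜 0 g = 0 :=
  homogeneousComponent_eq_of_forall 𝒜 fun k m _ => by
    simp only [LinearMap.zero_apply, decompose_zero, DirectSum.zero_apply, ZeroMemClass.coe_zero]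

theorem homogeneousComponent_add (u v : M →ₗ[R] N) (g : G) :
    homogeneousComponent ℳ 𝒩 𝒜 (u + v) g =
      homogeneousComponent ℳ 𝒩 𝒜 u g + homogeneousComponent ℳ 𝒩 𝒜 v g :=
  homogeneousComponent_eq_of_forall 𝒜 fun k m hm => by
    simp only [LinearMap.add_apply, decompose_add, DirectSum.add_apply, AddSubgroup.coe_add,
      homogeneousComponent_apply_of_mem 𝒩 𝒜 _ g hm]

theorem finite_setOf_homogeneousComponent_apply_ne_zero (u : M →ₗ[R] N) (m : M) :
    {g | homogeneousComponent ℳ 𝒩 𝒜 u g m ≠ 0}.Finite := by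
  induction m using Decomposition.inductionOn ℳ with
  | zero => simp only [map_zero, ne_eq, not_true_eq_false, Set.ofPred_false, Set.finite_empty]
  | @homogeneous k m =>
    simp only [homogeneousComponent_apply_of_mem 𝒩 𝒜 u _ m.2]
    exact (finite_setOf_coe_decompose_ne_zero 𝒩 (u m)).preimage (add_left_injective k).injOn
  | add m m' hm hm' =>
    refine (hm.union hm').subset fun g hg => ?_
    contrapose! hg
    simp only [Set.mem_union, Set.mem_ofPred_eq, not_or, not_not] at hg ⊢
    rw [map_add, hg.1, hg.2, add_zero]

theorem eq_sum_homogeneousComponent {u : M →ₗ[R] N}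
    (hu : {g | homogeneousComponent ℳ 𝒩 𝒜 u g ≠ 0}.Finite) :
    u = ∑ g ∈ hu.toFinset, homogeneousComponent ℳ 𝒩 𝒜 u g := by
  refine LinearMap.ext <| map_eq_of_forall_homogeneous ℳ fun k m hm => ?_
  calc u m = ∑ᶠ g, (decompose 𝒩 (u m) g : N) := (finsum_coe_decompose 𝒩 (u m)).symm
    _ = ∑ᶠ g, (decompose 𝒩 (u m) (g + k) : N) :=
        (finsum_comp_equiv (Equiv.addRight k)).symm
    _ = ∑ᶠ g, homogeneousComponent ℳ 𝒩 𝒜 u g m := by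
        simp only [homogeneousComponent_apply_of_mem 𝒩 𝒜 u _ hm]
    _ = ∑ g ∈ hu.toFinset, homogeneousComponent ℳ 𝒩 𝒜 u g m :=
        finsum_eq_sum_of_support_subset _ fun g hg => by
          rw [Finset.mem_coe, Set.Finite.mem_toFinset]
          exact fun h0 => hg (LinearMap.congr_fun h0 m)
    _ = (∑ g ∈ hu.toFinset, homogeneousComponent ℳ 𝒩 𝒜 u g) m :=
        (LinearMap.sum_apply _ _ m).symm

theorem homogeneousComponent_comp {P : Type*} [AddCommGroup P] [Module R P]
    (𝒬 : G → AddSubgroup P) [Decomposition 𝒬] [SetLike.GradedSMul 𝒜 𝒬]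
    {q : N →ₗ[R] P} (hq : ∀ g, ∀ x ∈ 𝒩 g, q x ∈ 𝒬 g) (u : M →ₗ[R] N) (g : G) :
    homogeneousComponent ℳ 𝒬 𝒜 (q ∘ₗ u) g = q ∘ₗ homogeneousComponent ℳ 𝒩 𝒜 u g :=
  homogeneousComponent_eq_of_forall 𝒜 fun k m hm => by
    rw [LinearMap.comp_apply, LinearMap.comp_apply, homogeneousComponent_apply_of_mem 𝒩 𝒜 u g hm]
    exact coe_decompose_map 𝒩 𝒬 (q := q.toAddMonoidHom) Function.injective_id hq (u m) (g + k)

end HomogeneousComponent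

section GradedHom

variable {G R M N : Type} [AddCommGroup G] [CommRing R]
  [AddCommGroup M] [Module R M] [AddCommGroup N] [Module R N]

section

variable [DecidableEq G] (ℳ : G → AddSubgroup M) (𝒩 : G → AddSubgroup N)
  (𝒜 : G → AddSubgroup R) [Decomposition 𝒜] [Decomposition ℳ] [Decomposition 𝒩]
  [SetLike.GradedSMul 𝒜 ℳ] [SetLike.GradedSMul 𝒜 𝒩]

theorem homogeneousComponent_mem_gradedHomSubgroup (u : M →ₗ[R] N) (g : G) :
    homogeneousComponent ℳ 𝒩 𝒜 u g ∈ gradedHomSubgroup ℳ 𝒩 g := fun k m hm => by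
  rw [homogeneousComponent_apply_of_mem 𝒩 𝒜 u g hm]
  exact SetLike.coe_mem _

variable {ℳ 𝒩}

theorem homogeneousComponent_of_mem_same {u : M →ₗ[R] N} {g : G}
    (hu : u ∈ gradedHomSubgroup ℳ 𝒩 g) : homogeneousComponent ℳ 𝒩 𝒜 u g = u :=
  homogeneousComponent_eq_of_forall 𝒜 fun k m hm => decompose_of_mem_same 𝒩 (hu k m hm)

theorem homogeneousComponent_of_mem_ne {u : M →ₗ[R] N} {g k : G}
    (hu : u ∈ gradedHomSubgroup ℳ 𝒩 g) (hgk : g ≠ k) : homogeneousComponent ℳ 𝒩 𝒜 u k = 0 :=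
  homogeneousComponent_eq_of_forall 𝒜 fun j m hm =>
    decompose_of_mem_ne 𝒩 (hu j m hm) ((add_left_injective j).ne hgk)

theorem mem_iSup_gradedHomSubgroup_iff {u : M →ₗ[R] N} :
    u ∈ ⨆ g, gradedHomSubgroup ℳ 𝒩 g ↔ {g | homogeneousComponent ℳ 𝒩 𝒜 u g ≠ 0}.Finite := by
  refine ⟨fun hu => ?_, fun hu => ?_⟩
  · refine AddSubgroup.iSup_induction _
      (C := fun u => {g | homogeneousComponent ℳ 𝒩 𝒜 u g ≠ 0}.Finite) hu
      (fun g u hu => ?_) ?_ fun u v hu hv => ?_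
    · refine (Set.finite_singleton g).subset fun k hk => ?_
      by_contra hgk
      exact hk (homogeneousComponent_of_mem_ne 𝒜 hu (Ne.symm hgk))
    · simp only [homogeneousComponent_zero, ne_eq, not_true_eq_false, Set.ofPred_false,
        Set.finite_empty]
    · refine (hu.union hv).subset fun g hg => ?_
      contrapose! hg
      simp only [Set.mem_union, Set.mem_ofPred_eq, not_or, not_not] at hg ⊢
      rw [homogeneousComponent_add, hg.1, hg.2, add_zero]
  · rw [eq_sum_homogeneousComponent ℳ 𝒩 𝒜 hu]
    exact sum_mem fun g _ =>
      AddSubgroup.mem_iSup_of_mem g (homogeneousComponent_mem_gradedHomSubgroup ℳ 𝒩 𝒜 u g)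

end

section Coarsen

variable {H : Type} [AddCommGroup H] (ψ : G →+ H) (ℳ : G → AddSubgroup M) (𝒩 : G → AddSubgroup N)

theorem le_coarsen (g : G) : ℳ g ≤ coarsen ψ ℳ (ψ g) :=
  le_iSup₂_of_le g rfl le_rfl

variable {ψ ℳ} in
theorem mem_gradedHomSubgroup_coarsen_left {𝒬 : H → AddSubgroup N} {h : H} {u : M →ₗ[R] N}
    (hu : ∀ g, ∀ m ∈ ℳ g, u m ∈ 𝒬 (h + ψ g)) : u ∈ gradedHomSubgroup (coarsen ψ ℳ) 𝒬 h := by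
  intro h' m hm
  have hle : coarsen ψ ℳ h' ≤ (𝒬 (h + h')).comap u.toAddMonoidHom :=
    iSup₂_le fun g hg m hm => (show ψ g = h' from hg) ▸ hu g m hm
  exact hle hm

theorem gradedHomSubgroup_le_coarsen (g : G) :
    gradedHomSubgroup (R := R) ℳ 𝒩 g ≤
      gradedHomSubgroup (coarsen ψ ℳ) (coarsen ψ 𝒩) (ψ g) := fun u hu =>
  mem_gradedHomSubgroup_coarsen_left fun k m hm => by
    rw [← map_add]
    exact le_coarsen ψ 𝒩 (g + k) (hu k m hm)

end Coarsen

end GradedHom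

section DirectSumGrading

variable {G : Type} {ι : Type} {N : ι → Type} [∀ i, AddCommGroup (N i)]
  {𝒩 : ∀ i, G → AddSubgroup (N i)}

theorem of_mem_directSumGrading [DecidableEq ι] {i : ι} {g : G} {x : N i} (hx : x ∈ 𝒩 i g) :
    of N i x ∈ directSumGrading 𝒩 g := by
  intro j
  obtain rfl | hij := eq_or_ne j i
  · rwa [of_eq_same]
  · rw [of_eq_of_ne _ _ _ hij]
    exact zero_mem _

theorem isInternal_directSumGrading [DecidableEq G] [∀ i, Decomposition (𝒩 i)] :
    IsInternal (directSumGrading 𝒩) := by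
  classical
  refine ⟨(injective_iff_map_eq_zero _).2 fun x hx => ?_, fun x => ?_⟩
  · ext g i
    have hi := coe_decompose_map_coeAddMonoidHom (𝒩 i) (q := DFinsupp.evalAddMonoidHom i)
      Function.injective_id (fun g y (hy : y ∈ directSumGrading 𝒩 g) => hy i) x g
    rw [hx, map_zero, decompose_zero] at hi
    exact hi.symm
  · change x ∈ (DirectSum.coeAddMonoidHom (directSumGrading 𝒩)).range
    induction x using DirectSum.induction_on with
    | zero => exact zero_mem _
    | add x y hx hy => exact add_mem hx hy
    | of i y =>
      induction y using Decomposition.inductionOn (𝒩 i) with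
      | zero => rw [map_zero]; exact zero_mem _
      | add y y' hy hy' => rw [map_add]; exact add_mem hy hy'
      | homogeneous y => exact mem_range_coeAddMonoidHom_of_mem (of_mem_directSumGrading y.2)

end DirectSumGrading

theorem isInternal_shift {G N : Type*} [AddCommGroup G] [DecidableEq G] [AddCommGroup N]
    (𝒩 : G → AddSubgroup N) [Decomposition 𝒩] (d : G) : IsInternal fun g => 𝒩 (g + d) := by
  refine ⟨(injective_iff_map_eq_zero _).2 fun x hx => ?_, fun x => ?_⟩
  · ext g
    have hg := coe_decompose_map_coeAddMonoidHom 𝒩 (q := AddMonoidHom.id N)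
      (add_left_injective d) (fun _ _ hy => hy) x g
    rw [hx, map_zero, decompose_zero] at hg
    exact hg.symm
  · change x ∈ (DirectSum.coeAddMonoidHom fun g => 𝒩 (g + d)).range
    induction x using Decomposition.inductionOn 𝒩 with
    | zero => exact zero_mem _
    | add x y hx hy => exact add_mem hx hy
    | @homogeneous k x =>
      exact mem_range_coeAddMonoidHom_of_mem (g := k - d) (by rw [sub_add_cancel]; exact x.2)

section GradedModule

variable {G R : Type} [AddCommGroup G] [CommRing R] {𝒜 : G → AddSubgroup R}

theorem IsGradedModule.gradedSMul_s12 {M : Type} [AddCommGroup M] [Module R M]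
    {ℳ : G → AddSubgroup M} (hℳ : IsGradedModule 𝒜 ℳ) : SetLike.GradedSMul 𝒜 ℳ where
  smul_mem _ _ _ _ := hℳ.1

theorem IsGradedModule.shift_s12 {N : Type} [AddCommGroup N] [Module R N]
    {𝒩 : G → AddSubgroup N} (h𝒩 : IsGradedModule 𝒜 𝒩) (d : G) :
    IsGradedModule 𝒜 fun g => 𝒩 (g + d) := by
  let := Classical.decEq G
  let := h𝒩.2.chooseDecomposition
  refine ⟨fun {g k r m} hr hm => ?_, isInternal_shift 𝒩 d⟩
  change r • m ∈ 𝒩 (g + k + d)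
  rw [add_assoc]
  exact h𝒩.1 hr hm

variable {ι : Type} {N : ι → Type} [∀ i, AddCommGroup (N i)] [∀ i, Module R (N i)]

theorem IsGradedModule.directSum {𝒩 : ∀ i, G → AddSubgroup (N i)}
    (h𝒩 : ∀ i, IsGradedModule 𝒜 (𝒩 i)) : IsGradedModule 𝒜 (directSumGrading 𝒩) :=
  let := Classical.decEq G
  let (i : ι) : Decomposition (𝒩 i) := (h𝒩 i).2.chooseDecomposition
  ⟨fun hr hm i => (h𝒩 i).1 hr (hm i), isInternal_directSumGrading⟩

end GradedModule

theorem exists_linearMap_directSum_apply_eq_s12 {ι R M : Type*} {N : ι → Type*} [Semiring R]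
    [AddCommMonoid M] [Module R M] [∀ i, AddCommMonoid (N i)] [∀ i, Module R (N i)]
    {v : ∀ i, M →ₗ[R] N i} (hv : ∀ m, {i | v i m ≠ 0}.Finite) :
    ∃ w : M →ₗ[R] ⨁ i, N i, ∀ m i, w m i = v i m := by
  classical
  have hmk (m : M) : ∃ x : ⨁ i, N i, ∀ i, x i = v i m := by
    refine ⟨DirectSum.mk N (hv m).toFinset fun i => v i m, fun i => ?_⟩
    by_cases hi : v i m = 0
    · rw [mk_apply_of_notMem (by simpa using hi), hi]
    · rw [mk_apply_of_mem (by simpa using hi)]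
  choose w hw using hmk
  exact ⟨{ toFun := w
           map_add' := fun m m' => DFinsupp.ext fun i => by
             rw [DirectSum.add_apply, hw, hw, hw, map_add]
           map_smul' := fun r m => DFinsupp.ext fun i => by
             rw [RingHom.id_apply, DirectSum.smul_apply, hw, hw, map_smul] }, hw⟩

section CoarseningHomIso

variable {G H R M : Type} [AddCommGroup G] [AddCommGroup H] [CommRing R]
  [AddCommGroup M] [Module R M]

/-- The natural transformation `h_ψ^M` is an isomorphism. Its components are inclusions of
subgroups of `M →ₗ[R] N`, so this is expressed by equality of these subgroups. -/
def IsCoarseningHomIso (𝒜 : G → AddSubgroup R) (ℳ : G → AddSubgroup M) (ψ : G →+ H) : Prop :=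
  ∀ (N : Type) [AddCommGroup N] [Module R N], ∀ 𝒩 : G → AddSubgroup N, IsGradedModule 𝒜 𝒩 →
    (⨆ g : G, gradedHomSubgroup (R := R) ℳ 𝒩 g) =
      ⨆ h : H, gradedHomSubgroup (R := R) (coarsen ψ ℳ) (coarsen ψ 𝒩) h

variable {𝒜 : G → AddSubgroup R} {ℳ : G → AddSubgroup M} {φ : G →+ H}

theorem mem_gradedHomSubgroup_coarsen_directSumGrading {ι : Type} {N : ι → Type}
    [∀ i, AddCommGroup (N i)] [∀ i, Module R (N i)] {𝒩 : ∀ i, G → AddSubgroup (N i)}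
    {f : ι → G} {h : H} (hf : ∀ i, φ (f i) = h) {w : M →ₗ[R] ⨁ i, N i}
    (hw : ∀ i, component R ι N i ∘ₗ w ∈ gradedHomSubgroup ℳ (𝒩 i) (f i)) :
    w ∈ gradedHomSubgroup (coarsen φ ℳ) (coarsen φ (directSumGrading 𝒩)) h := by
  classical
  refine mem_gradedHomSubgroup_coarsen_left fun g m hm => ?_
  rw [← sum_support_of (w m)]
  refine sum_mem fun i _ => ?_
  rw [← hf i, ← map_add]
  exact le_coarsen φ _ (f i + g) (of_mem_directSumGrading (hw i g m hm))

theorem IsCoarseningHomIso.finite_setOf_ne_zero (hφ : IsCoarseningHomIso 𝒜 ℳ φ)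
    (h𝒜 : IsGradedRing 𝒜) (hℳ : IsGradedModule 𝒜 ℳ) {ι : Type} {N : ι → Type}
    [∀ i, AddCommGroup (N i)] [∀ i, Module R (N i)] {𝒩 : ∀ i, G → AddSubgroup (N i)}
    (h𝒩 : ∀ i, IsGradedModule 𝒜 (𝒩 i)) {f : ι → G} (hf : Function.Injective f) {h : H}
    (hfh : ∀ i, φ (f i) = h) {v : ∀ i, M →ₗ[R] N i}
    (hv : ∀ i, v i ∈ gradedHomSubgroup ℳ (𝒩 i) (f i)) (hvfin : ∀ m, {i | v i m ≠ 0}.Finite) :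
    {i | v i ≠ 0}.Finite := by
  let := Classical.decEq G
  let := h𝒜.2.2.chooseDecomposition
  let := hℳ.2.chooseDecomposition
  let (i : ι) : Decomposition (𝒩 i) := (h𝒩 i).2.chooseDecomposition
  have hsum := IsGradedModule.directSum h𝒩
  let := hsum.2.chooseDecomposition
  have := hℳ.gradedSMul_s12
  have (i : ι) := (h𝒩 i).gradedSMul_s12
  have := hsum.gradedSMul_s12
  obtain ⟨w, hw⟩ := exists_linearMap_directSum_apply_eq_s12 hvfin
  have hwv (i : ι) : component R ι N i ∘ₗ w = v i := LinearMap.ext fun m => hw m i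
  have hwφ : w ∈ ⨆ h, gradedHomSubgroup (coarsen φ ℳ) (coarsen φ (directSumGrading 𝒩)) h :=
    AddSubgroup.mem_iSup_of_mem h <|
      mem_gradedHomSubgroup_coarsen_directSumGrading hfh fun i => (hwv i).symm ▸ hv i
  rw [← hφ _ _ hsum, mem_iSup_gradedHomSubgroup_iff 𝒜] at hwφ
  refine (hwφ.preimage hf.injOn).subset fun i hi h0 => hi ?_
  rw [← homogeneousComponent_of_mem_same 𝒜 (hv i), ← hwv i,
    homogeneousComponent_comp ℳ (directSumGrading 𝒩) 𝒜 (𝒩 i) fun g x hx => hx i, h0,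
    LinearMap.comp_zero]

theorem IsCoarseningHomIso.iSup_gradedHomSubgroup_eq_top (hφ : IsCoarseningHomIso 𝒜 ℳ φ)
    (hker : Infinite φ.ker) (h𝒜 : IsGradedRing 𝒜) (hℳ : IsGradedModule 𝒜 ℳ) {N : Type}
    [AddCommGroup N] [Module R N] {𝒩 : G → AddSubgroup N} (h𝒩 : IsGradedModule 𝒜 𝒩) :
    ⨆ g, gradedHomSubgroup (R := R) ℳ 𝒩 g = ⊤ := by
  let := Classical.decEq G
  let := h𝒜.2.2.chooseDecomposition
  let := hℳ.2.chooseDecomposition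
  let := h𝒩.2.chooseDecomposition
  have := hℳ.gradedSMul_s12
  have := h𝒩.gradedSMul_s12
  refine (AddSubgroup.eq_top_iff' _).2 fun u => (mem_iSup_gradedHomSubgroup_iff 𝒜).2 ?_
  by_contra hinf
  let e := Set.Infinite.natEmbedding _ hinf
  let f := Infinite.natEmbedding φ.ker
  let v (n : ℕ) : M →ₗ[R] N := homogeneousComponent ℳ 𝒩 𝒜 u (e n)
  have hv (n : ℕ) :
      v n ∈ gradedHomSubgroup ℳ (fun g => 𝒩 (g + ((e n : G) - f n))) (f n : G) := by
    intro k m hm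
    have hdeg : (f n : G) + k + ((e n : G) - f n) = e n + k := by abel
    change v n m ∈ 𝒩 ((f n : G) + k + ((e n : G) - f n))
    rw [hdeg]
    exact homogeneousComponent_mem_gradedHomSubgroup ℳ 𝒩 𝒜 u (e n) k m hm
  have hvfin (m : M) : {n | v n m ≠ 0}.Finite :=
    (finite_setOf_homogeneousComponent_apply_ne_zero ℳ 𝒩 𝒜 u m).preimage
      (Subtype.val_injective.comp e.injective).injOn
  have hfin := hφ.finite_setOf_ne_zero h𝒜 hℳ (fun n => h𝒩.shift_s12 ((e n : G) - f n))
    (Subtype.val_injective.comp f.injective) (fun n => (f n).2) hv hvfin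
  have huniv : {n | v n ≠ 0} = Set.univ := Set.eq_univ_of_forall fun n => (e n).2
  exact Set.infinite_univ (huniv ▸ hfin)

end CoarseningHomIso

theorem gradedHom_coarsening_iso_of_iso_for_infinite_kernel_general
    {G K H R M : Type} [AddCommGroup G] [AddCommGroup K] [AddCommGroup H] [CommRing R]
    [AddCommGroup M] [Module R M] {𝒜 : G → AddSubgroup R} (h𝒜 : IsGradedRing 𝒜)
    {ℳ : G → AddSubgroup M} (hℳ : IsGradedModule 𝒜 ℳ) {φ : G →+ K} (hker : Infinite φ.ker)
    (hφ : IsCoarseningHomIso 𝒜 ℳ φ) (ψ : G →+ H) : IsCoarseningHomIso 𝒜 ℳ ψ := by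
  intro N _ _ 𝒩 h𝒩
  refine le_antisymm (iSup_le fun g => ?_) ?_
  · exact le_iSup_of_le (ψ g) (gradedHomSubgroup_le_coarsen ψ ℳ 𝒩 g)
  · exact (hφ.iSup_gradedHomSubgroup_eq_top hker h𝒜 hℳ h𝒩).symm ▸ le_top

/-- **Statement 17** (Corollary 2.80): if there is an infinite subgroup `F ⊆ G` such that
`h_π^M` is an isomorphism for the canonical projection `π : G → G/F`, then `h_ψ^M` is an
isomorphism for every epimorphism `ψ : G → H`; here, as in Statement 16, the claim that
`h_ψ^M` is an isomorphism is expressed by the equality of the subgroups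
`⨆_{g : G} Hom(M, N(g))` and `⨆_{h : H} Hom(M_[ψ], N_[ψ](h))` of `M →ₗ[R] N` for every
`G`-graded `R`-module `N`. In particular (taking `H = 0`) `h_0^M` is an isomorphism. -/
theorem gradedHom_coarsening_iso_of_iso_for_infinite_kernel
    {G R M : Type} [AddCommGroup G] [CommRing R] [AddCommGroup M] [Module R M]
    (𝒜 : G → AddSubgroup R) (h𝒜 : IsGradedRing 𝒜)
    (ℳ : G → AddSubgroup M) (hℳ : IsGradedModule 𝒜 ℳ)
    (F : AddSubgroup G) (hF : Infinite F)
    (hπ : ∀ (N : Type) [AddCommGroup N] [Module R N], ∀ 𝒩 : G → AddSubgroup N,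
      IsGradedModule 𝒜 𝒩 →
        (⨆ g : G, gradedHomSubgroup (R := R) ℳ 𝒩 g)
          = ⨆ h : G ⧸ F, gradedHomSubgroup (R := R)
              (coarsen (QuotientAddGroup.mk' F) ℳ) (coarsen (QuotientAddGroup.mk' F) 𝒩) h) :
    ∀ (H : Type) [AddCommGroup H], ∀ ψ : G →+ H, Function.Surjective ψ →
      ∀ (N : Type) [AddCommGroup N] [Module R N], ∀ 𝒩 : G → AddSubgroup N,
        IsGradedModule 𝒜 𝒩 →
          (⨆ g : G, gradedHomSubgroup (R := R) ℳ 𝒩 g)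
            = ⨆ h : H, gradedHomSubgroup (R := R) (coarsen ψ ℳ) (coarsen ψ 𝒩) h := by
  exact fun H _ ψ _ => gradedHom_coarsening_iso_of_iso_for_infinite_kernel_general h𝒜 hℳ
    (by rwa [QuotientAddGroup.ker_mk']) hπ ψ
end
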